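/- arXiv:gr-qc/9805081 — 5 statements merged into one kernel-verified Lean document; each statement's English description precedes it below -/
import Mathlib

section
/- Let n ≥ 1, let ξ : ℝ × ℝⁿ × ℝⁿ → ℝⁿ be continuous, and let K : (ℝ × ℝⁿ) × (ℝ × ℝⁿ) → ℝ^{(1+n)×(1+n)} be a family of matrices (indexed by μ, λ ∈ {0,1,…,n}) such that (i) K⁰_λ(x,v) = 0 for all λ, x, v, and (ii) ξⁱ(t, x, w) = Kⁱ₀((t,x),(1,w)) + Σ_{j=1}^{n} wʲ Kⁱⱼ((t,x),(1,w)) for all t ∈ ℝ, x, w ∈ ℝⁿ and all i ∈ {1,…,n}. Then: (a) any C² curve γ = (γ⁰, γ⃗) : ℝ → ℝ × ℝⁿ satisfying the geodesic equation γ̈^μ(t) = Σ_λ K^μ_λ(γ(t), γ̇(t)) γ̇^λ(t) with γ̇⁰(0) = 1 has γ⁰(t) = γ⁰(0) + t and γ̇⁰(t) = 1 for all t; (b) a C² curve γ with γ⁰(t) = t satisfies the geodesic equation if and only if its spatial part satisfies the second-order dynamic equation d²γ⃗ⁱ/dt² = ξⁱ(t, γ⃗(t), dγ⃗/dt(t))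 for all t and all i. Moreover, such a K always exists (e.g. Kⁱ₀((t,x),v) = ξⁱ(t,x,(v¹,…,vⁿ)) and Kⁱⱼ = 0). -/
/-- Any second order dynamic equation `x¨ⁱ = ξⁱ(t,x,ẋ)` of non-relativistic
mechanics is equivalent to a geodesic equation for a connection `K` on the tangent bundle
of `ℝ × ℝⁿ` with vanishing temporal components, and such a connection always exists. -/
theorem nonrelativistic_dynamic_eq_as_geodesic_eq (n : ℕ) (hn : 1 ≤ n)
    (ξ : ℝ → (Fin n → ℝ) → (Fin n → ℝ) → Fin n → ℝ)
    (hξ : Continuous fun p : ℝ × (Fin n → ℝ) × (Fin n → ℝ) => ξ p.1 p.2.1 p.2.2) :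
    (∀ K : (Fin (n+1) → ℝ) → (Fin (n+1) → ℝ) → Fin (n+1) → Fin (n+1) → ℝ,
      -- (i) vanishing temporal components
      (∀ x v l, K x v 0 l = 0) →
      -- (ii) K reproduces ξ on the subbundle of non-relativistic velocities
      (∀ (t : ℝ) (x w : Fin n → ℝ) (i : Fin n),
        ξ t x w i
          = K (Fin.cons t x) (Fin.cons 1 w) i.succ 0
            + ∑ j : Fin n, w j * K (Fin.cons t x) (Fin.cons 1 w) i.succ j.succ) →
      -- (a) temporal behaviour of geodesics
      ((∀ γ : ℝ → Fin (n+1) → ℝ, (∀ mu, ContDiff ℝ 2 fun t => γ t mu) →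
          (∀ (t : ℝ) (mu : Fin (n+1)), deriv (deriv fun s => γ s mu) t
            = ∑ l : Fin (n+1),
                K (γ t) (fun nu => deriv (fun s => γ s nu) t) mu l
                  * deriv (fun s => γ s l) t) →
          deriv (fun s => γ s 0) 0 = 1 →
          ∀ t : ℝ, γ t 0 = γ 0 0 + t ∧ deriv (fun s => γ s 0) t = 1)
      -- (b) geodesic equation ↔ dynamic equation
        ∧ (∀ γ : ℝ → Fin (n+1) → ℝ, (∀ mu, ContDiff ℝ 2 fun t => γ t mu) →
          (∀ t : ℝ, γ t 0 = t) →
          ((∀ (t : ℝ) (mu : Fin (n+1)), deriv (deriv fun s => γ s mu) t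
              = ∑ l : Fin (n+1),
                  K (γ t) (fun nu => deriv (fun s => γ s nu) t) mu l
                    * deriv (fun s => γ s l) t)
            ↔ (∀ (t : ℝ) (i : Fin n), deriv (deriv fun s => γ s i.succ) t
                = ξ t (fun j => γ t j.succ)
                    (fun j => deriv (fun s => γ s j.succ) t) i)))))
    -- Moreover, such a connection K always exists
    ∧ (∃ K : (Fin (n+1) → ℝ) → (Fin (n+1) → ℝ) → Fin (n+1) → Fin (n+1) → ℝ,
        (∀ x v l, K x v 0 l = 0) ∧
        (∀ (t : ℝ) (x w : Fin n → ℝ) (i : Fin n),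
          ξ t x w i
            = K (Fin.cons t x) (Fin.cons 1 w) i.succ 0
              + ∑ j : Fin n, w j * K (Fin.cons t x) (Fin.cons 1 w) i.succ j.succ)) := by
  refine ⟨?_, ?_⟩
  · intro K hK0 hKξ
    refine ⟨?_, ?_⟩
    · intro γ hγ hgeo h1
      have hd : Differentiable ℝ (fun s => γ s 0) := (hγ 0).differentiable (by norm_num)
      have hdd : Differentiable ℝ (deriv fun s => γ s 0) := (hγ 0).differentiable_deriv_two
      have hz : ∀ t, deriv (deriv fun s => γ s 0) t = 0 := by
        intro t
        rw [hgeo t 0]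
        simp [hK0]
      have hone : ∀ t, deriv (fun s => γ s 0) t = 1 := fun t =>
        (is_const_of_deriv_eq_zero hdd hz t 0).trans h1
      intro t
      refine ⟨?_, hone t⟩
      have hc : ∀ t, HasDerivAt (fun s => γ s 0 - s) 0 t := by
        intro t
        have h := (hd t).hasDerivAt.sub (hasDerivAt_id' t)
        rw [hone t, sub_self] at h
        exact h
      have h := is_const_of_deriv_eq_zero (fun t => (hc t).differentiableAt)
        (fun t => (hc t).deriv) t 0
      simp only [sub_zero] at h
      linarith
    · intro γ hγ h0
      have hfun : (fun s => γ s 0) = fun s => s := funext h0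
      have hone : ∀ t, deriv (fun s => γ s 0) t = 1 := by
        intro t
        rw [hfun]
        exact (hasDerivAt_id' t).deriv
      have hzero : ∀ t, deriv (deriv fun s => γ s 0) t = 0 := by
        intro t
        rw [show (deriv fun s => γ s 0) = fun _ => (1 : ℝ) from funext hone]
        exact deriv_const t 1
      have key : ∀ (t : ℝ) (i : Fin n),
          ∑ l : Fin (n+1), K (γ t) (fun nu => deriv (fun s => γ s nu) t) i.succ l
              * deriv (fun s => γ s l) t
            = ξ t (fun j => γ t j.succ) (fun j => deriv (fun s => γ s j.succ) t) i := by
        intro t i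
        have e1 : (Fin.cons t (fun j => γ t j.succ) : Fin (n+1) → ℝ) = γ t := by
          funext k
          refine Fin.cases ?_ (fun j => ?_) k
          · simp [h0]
          · simp
        have e2 : (Fin.cons 1 (fun j => deriv (fun s => γ s j.succ) t) : Fin (n+1) → ℝ)
            = fun nu => deriv (fun s => γ s nu) t := by
          funext k
          refine Fin.cases ?_ (fun j => ?_) k
          · rw [Fin.cons_zero, hone t]
          · simp
        rw [hKξ, e1, e2, Fin.sum_univ_succ, hone t, mul_one]
        congr 1
        exact Finset.sum_congr rfl fun j _ => mul_comm _ _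
      constructor
      · intro h t i
        rw [h t i.succ, key]
      · intro h t mu
        refine Fin.cases ?_ (fun i => ?_) mu
        · rw [hzero]
          simp [hK0]
        · rw [h t i, key]
  · refine ⟨fun x v mu l => Fin.cases 0
      (fun i => Fin.cases (ξ (x 0) (fun j => x j.succ) (fun j => v j.succ) i)
        (fun _ => 0) l) mu, ?_, ?_⟩
    · intro x v l
      rfl
    · intro t x w i
      simp
end

section
/- Let n ≥ 1 and let hⁱ_λ : ℝ × ℝⁿ → ℝ (i ∈ {1,…,n}, λ ∈ {0,1,…,n}) be arbitrary functions. Define the soldering form σ on the tangent bundle of ℝ × ℝⁿ by σ⁰_λ(x,v) = 0, σⁱₖ(x,v) = hⁱₖ(x) − ½ hⁱₖ(x) v⁰, and σⁱ₀(x,v) = −½ Σ_k hⁱₖ(x) vᵏ − hⁱ₀(x) v⁰ + hⁱ₀(x). Then for every x and every v ∈ ℝ × ℝⁿ with v⁰ = 1, Σ_λ σ^μ_λ(x,v) v^λ = 0 for all μ. Consequently, for any connection K with K⁰_λ = 0, a C² curve γ with γ⁰(t) = t satisfies the geodesic equation of K if and only if it satisfies the geodesic equation of K + σ; i.e. the two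 connections define the same non-relativistic dynamic equation. -/
/-- the soldering form `σ` with components `σ⁰_λ = 0`,
`σⁱₖ = hⁱₖ − ½hⁱₖ v⁰`, `σⁱ₀ = −½ hⁱₖ vᵏ − hⁱ₀ v⁰ + hⁱ₀` satisfies
`σ^μ_λ v^λ = 0` whenever `v⁰ = 1`; consequently, for any connection `K` with
vanishing temporal components, `K` and `K + σ` have the same geodesics among curves
with `γ⁰(t) = t`, i.e. they define the same non-relativistic dynamic equation. -/
theorem soldering_form_ambiguity_of_dynamic_equation (n : ℕ) (hn : 1 ≤ n)
    (h : (Fin (n+1) → ℝ) → Fin n → Fin (n+1) → ℝ)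
    (σ : (Fin (n+1) → ℝ) → (Fin (n+1) → ℝ) → Fin (n+1) → Fin (n+1) → ℝ)
    (hσ0 : ∀ x v l, σ x v 0 l = 0)
    (hσk : ∀ x v (i k : Fin n), σ x v i.succ k.succ
      = h x i k.succ - (1/2) * h x i k.succ * v 0)
    (hσt : ∀ x v (i : Fin n), σ x v i.succ 0
      = -(1/2) * (∑ k : Fin n, h x i k.succ * v k.succ) - h x i 0 * v 0 + h x i 0) :
    (∀ x v : Fin (n+1) → ℝ, v 0 = 1 →
      ∀ mu : Fin (n+1), (∑ l : Fin (n+1), σ x v mu l * v l) = 0)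
    ∧ ∀ K : (Fin (n+1) → ℝ) → (Fin (n+1) → ℝ) → Fin (n+1) → Fin (n+1) → ℝ,
        (∀ x v l, K x v 0 l = 0) →
        ∀ γ : ℝ → Fin (n+1) → ℝ, (∀ mu, ContDiff ℝ 2 fun t => γ t mu) →
          (∀ t : ℝ, γ t 0 = t) →
          ((∀ (t : ℝ) (mu : Fin (n+1)), deriv (deriv fun s => γ s mu) t
              = ∑ l : Fin (n+1),
                  K (γ t) (fun nu => deriv (fun s => γ s nu) t) mu l
                    * deriv (fun s => γ s l) t)
            ↔ (∀ (t : ℝ) (mu : Fin (n+1)), deriv (deriv fun s => γ s mu) t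
              = ∑ l : Fin (n+1),
                  (K (γ t) (fun nu => deriv (fun s => γ s nu) t) mu l
                    + σ (γ t) (fun nu => deriv (fun s => γ s nu) t) mu l)
                    * deriv (fun s => γ s l) t)) := by
  have key : ∀ x v : Fin (n+1) → ℝ, v 0 = 1 →
      ∀ mu : Fin (n+1), (∑ l : Fin (n+1), σ x v mu l * v l) = 0 := by
    intro x v hv mu
    refine Fin.cases ?_ (fun i => ?_) mu
    · simp [hσ0]
    · rw [Fin.sum_univ_succ, hσt, hv]
      have e : ∀ k : Fin n, σ x v i.succ k.succ * v k.succ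
          = (1/2) * (h x i k.succ * v k.succ) := by
        intro k
        rw [hσk, hv]
        ring
      rw [Finset.sum_congr rfl (fun k _ => e k), ← Finset.mul_sum]
      ring
  refine ⟨key, ?_⟩
  intro K _ γ _ hγ
  refine forall_congr' fun t => forall_congr' fun mu => ?_
  have hd : deriv (fun s => γ s 0) t = 1 := by
    simp [hγ]
  have hk := key (γ t) (fun nu => deriv (fun s => γ s nu) t) hd mu
  simp only [add_mul, Finset.sum_add_distrib]
  rw [hk, add_zero]
end

section
/- Let η denote the Minkowski form on ℝ⁴, η(u,w) = u⁰w⁰ − u¹w¹ − u²w² − u³w³. Let ξ : ℝ⁴ → ℝ⁴ be continuous and let c : ℝ → ℝ⁴ be a C² curve satisfying the relativistic equation c̈^μ(t) = ξ^μ(c(t)) − η(ξ(c(t)), ċ(t)) ċ^μ(t) for all t. If η(ċ(0), ċ(0)) = 1, then η(ċ(t), ċ(t)) = 1 for all t ∈ ℝ; i.e. solutions of this equation remain on the bundle of relativistic hyperboloids {v ∈ ℝ⁴ : η(v,v) = 1}. -/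
/-- The Minkowski form of signature `(+,−,−,−)` on `ℝ⁴`. -/
def minkowskiForm (u w : Fin 4 → ℝ) : ℝ :=
  u 0 * w 0 - u 1 * w 1 - u 2 * w 2 - u 3 * w 3

/-- solutions of the relativistic equation
`c̈^μ = ξ^μ − η(ξ, ċ) ċ^μ` with `η(ċ(0), ċ(0)) = 1` remain on the bundle of
relativistic hyperboloids `{v : η(v,v) = 1}` for all time. -/
theorem relativization_preserves_hyperboloid
    (ξ : (Fin 4 → ℝ) → Fin 4 → ℝ) (hξ : Continuous ξ)
    (c : ℝ → Fin 4 → ℝ) (hc : ∀ mu, ContDiff ℝ 2 fun t => c t mu)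
    (hgeo : ∀ (t : ℝ) (mu : Fin 4), deriv (deriv fun s => c s mu) t
      = ξ (c t) mu
        - minkowskiForm (ξ (c t)) (fun nu => deriv (fun s => c s nu) t)
          * deriv (fun s => c s mu) t)
    (hinit : minkowskiForm (fun nu => deriv (fun s => c s nu) 0)
      (fun nu => deriv (fun s => c s nu) 0) = 1) :
    ∀ t : ℝ, minkowskiForm (fun nu => deriv (fun s => c s nu) t)
      (fun nu => deriv (fun s => c s nu) t) = 1 := by
  have hC : ∀ mu, ContDiff ℝ 1 (deriv fun s => c s mu) := fun mu =>
    ((contDiff_succ_iff_deriv (n := 1)).1 (by simpa [one_add_one_eq_two] using hc mu)).2.2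
  have hD : ∀ mu t, HasDerivAt (deriv fun s => c s mu) (deriv (deriv fun s => c s mu) t) t :=
    fun mu t => ((hC mu).differentiable (by norm_num) t).hasDerivAt
  have hcc : Continuous c := continuous_pi fun mu => (hc mu).continuous
  have hξc : ∀ mu, Continuous fun t => ξ (c t) mu := fun mu =>
    (continuous_apply mu).comp (hξ.comp hcc)
  have hvc : ∀ mu, Continuous (deriv fun s => c s mu) := fun mu => (hC mu).continuous
  obtain ⟨g, hg⟩ : ∃ g : ℝ → ℝ, g = fun t => minkowskiForm (ξ (c t))
    (fun nu => deriv (fun s => c s nu) t) := ⟨_, rfl⟩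
  have hgc : Continuous g := by
    rw [hg]
    unfold minkowskiForm
    exact ((((hξc 0).mul (hvc 0)).sub ((hξc 1).mul (hvc 1))).sub ((hξc 2).mul (hvc 2))).sub
      ((hξc 3).mul (hvc 3))
  have hG : ∀ t, HasDerivAt (fun x => ∫ s in (0:ℝ)..x, g s) (g t) t := fun t =>
    hgc.integral_hasStrictDerivAt 0 t |>.hasDerivAt
  have hF : ∀ t, HasDerivAt (fun t => Real.exp (2 * ∫ s in (0:ℝ)..t, g s) *
      (minkowskiForm (fun nu => deriv (fun s => c s nu) t)
        (fun nu => deriv (fun s => c s nu) t) - 1)) 0 t := by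
    intro t
    unfold minkowskiForm
    have h := (((hG t).const_mul 2).exp).mul
      ((((((hD 0 t).mul (hD 0 t)).sub ((hD 1 t).mul (hD 1 t))).sub
        ((hD 2 t).mul (hD 2 t))).sub ((hD 3 t).mul (hD 3 t))).sub_const 1)
    refine h.congr_deriv ?_
    have hgt : g t = minkowskiForm (ξ (c t)) (fun nu => deriv (fun s => c s nu) t) := by rw [hg]
    simp only [hgeo, ← hgt, Pi.mul_apply, Pi.sub_apply]
    unfold minkowskiForm at hgt
    linear_combination (-2 * Real.exp (2 * ∫ s in (0:ℝ)..t, g s)) * hgt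
  intro t
  have h0 := is_const_of_deriv_eq_zero (fun t => (hF t).differentiableAt)
    (fun t => (hF t).deriv) t 0
  simp only [hinit, sub_self, mul_zero] at h0
  have := (mul_eq_zero.1 h0).resolve_left (Real.exp_ne_zero _)
  linarith
end

section
/- Let g = (g_{μν}) be an invertible symmetric 4×4 real matrix with g₀ᵢ = 0 for i ∈ {1,2,3} and g₀₀ ≠ 0 (so g⁰⁰ = 1/g₀₀), and let bⁱ_μ (i ∈ {1,2,3}, μ ∈ {0,1,2,3}) be real numbers. Define σ⁰₀ = 0, σ⁰ₖ = −g⁰⁰ Σ_j g_{kj} bʲ₀ (k ∈ {1,2,3}), σⁱ₀ = bⁱ₀, and σⁱₖ = bⁱₖ. Then Σ_{μ,ν,λ} g_{μν} σ^μ_λ v^λ v^ν = 0 for all v ∈ ℝ⁴ if and only if Σ_i (g_{ik} bⁱⱼ + g_{ij} bⁱₖ) = 0 for all j, k ∈ {1,2,3}; i.e. the external force bⁱₖ ẋᵏ + bⁱ₀ admits a relativization as a soldering form satisfying the hyperboloid-preservation condition exactly when its velocity-dependent part is of Lorentz type (g-antisymmetric). -/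
/-- for a metric `g` with `g₀ᵢ = 0` and an external force
`bⁱₖ ẋᵏ + bⁱ₀`, the soldering form `σ⁰₀ = 0`, `σ⁰ₖ = −g⁰⁰ gₖⱼ bʲ₀`, `σⁱ₀ = bⁱ₀`,
`σⁱₖ = bⁱₖ` satisfies `g_{μν} σ^μ_λ v^λ v^ν = 0` for all `v` iff
`g_{ik} bⁱⱼ + g_{ij} bⁱₖ = 0`, i.e. iff the velocity-dependent part of the force is
of Lorentz type (`g`-antisymmetric). -/
theorem lorentz_type_force_iff_hyperboloid_condition
    (g : Matrix (Fin 4) (Fin 4) ℝ)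
    (hgsym : ∀ mu nu, g mu nu = g nu mu)
    (hg0i : ∀ i : Fin 3, g 0 i.succ = 0)
    (hg00 : g 0 0 ≠ 0)
    (hginv : IsUnit g.det)
    (b : Fin 3 → Fin 4 → ℝ)
    (σ : Fin 4 → Fin 4 → ℝ)
    (hσ00 : σ 0 0 = 0)
    (hσ0k : ∀ k : Fin 3, σ 0 k.succ
      = -(1 / g 0 0) * ∑ j : Fin 3, g k.succ j.succ * b j 0)
    (hσi0 : ∀ i : Fin 3, σ i.succ 0 = b i 0)
    (hσik : ∀ i k : Fin 3, σ i.succ k.succ = b i k.succ) :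
    (∀ v : Fin 4 → ℝ,
      (∑ mu : Fin 4, ∑ nu : Fin 4, ∑ l : Fin 4, g mu nu * σ mu l * v l * v nu) = 0)
    ↔ (∀ j k : Fin 3,
        (∑ i : Fin 3, (g i.succ k.succ * b i j.succ + g i.succ j.succ * b i k.succ)) = 0) := by
  have hs0 : ∀ k : Fin 3, g 0 0 * σ 0 k.succ = -∑ j : Fin 3, g k.succ j.succ * b j 0 := by
    intro k
    rw [hσ0k]
    field_simp
  have hgi0 : ∀ i : Fin 3, g i.succ 0 = 0 := fun i => by rw [hgsym, hg0i]
  have key : ∀ v : Fin 4 → ℝ,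
      2 * (∑ mu : Fin 4, ∑ nu : Fin 4, ∑ l : Fin 4, g mu nu * σ mu l * v l * v nu)
      = ∑ j : Fin 3, ∑ k : Fin 3, (∑ i : Fin 3,
        (g i.succ k.succ * b i j.succ + g i.succ j.succ * b i k.succ))
          * v j.succ * v k.succ := by
    intro v
    simp only [Fin.sum_univ_succ (n := 3), hσ00, hσi0, hσik, hg0i, hgi0, hs0]
    have e1 := hgsym (Fin.succ 0) (Fin.succ 1)
    have e2 := hgsym (Fin.succ 0) (Fin.succ 2)
    have e3 := hgsym (Fin.succ 1) (Fin.succ 2)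
    simp only [Fin.sum_univ_three, e1, e2, e3]
    ring
  constructor
  · intro h
    have q : ∀ a c d : ℝ, _ := fun a c d => key (Fin.cons 0 ![a, c, d])
    simp only [h, mul_zero, Fin.cons_succ] at q
    have h1 := q 1 0 0
    have h2 := q 0 1 0
    have h3 := q 0 0 1
    have h4 := q 1 1 0
    have h5 := q 1 0 1
    have h6 := q 0 1 1
    simp only [Fin.sum_univ_three, Matrix.cons_val, mul_zero, mul_one, add_zero, zero_add]
      at h1 h2 h3 h4 h5 h6
    intro j k
    fin_cases j <;> fin_cases k <;>
      simp only [Fin.sum_univ_three, Fin.zero_eta, Fin.mk_one, Fin.reduceFinMk] <;> linarith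
  · intro h v
    have := key v
    simp only [h, zero_mul, Finset.sum_const_zero] at this
    linarith
end

section
/- Let n ≥ 1, let mᵢⱼ, kᵢ, f : ℝ × ℝⁿ → ℝ be C¹ functions with (mᵢⱼ(t,x)) a symmetric invertible matrix for every (t,x), with inverse ((m⁻¹)^{ij}). Define on ℝ × ℝⁿ the symmetric matrix field g by g₀₀ = −2f, g₀ᵢ = −kᵢ, gᵢⱼ = −mᵢⱼ, and set {_λμν} = −½(∂_λ g_{μν} + ∂_ν g_{μλ} − ∂_μ g_{λν}) (indices λ, μ, ν ∈ {0,1,…,n}, where ∂₀ = ∂/∂t). Then a C² curve c : ℝ → ℝⁿ satisfies the Euler–Lagrange equations of the quadratic Lagrangian L(t,x,w) = ½ Σ mᵢⱼ(t,x) wⁱ wʲ + Σ kᵢ(t,x) wⁱ + f(t,x), namely d/dt [Σ_j mᵢⱼ(t,c(t)) ċʲ(t) + kᵢ(t,c(t))] = ½ Σ_{j,l} ∂ᵢm_{jl}(t,c(t)) ċʲ ċˡ + Σ_j ∂ᵢkⱼ(t,c(t)) ċʲ + ∂ᵢf(t,c(t)) for all i and t, if and only if c̈ⁱ(t) = −Σ_{k,λ,ν}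 (m⁻¹)^{ik}(t,c(t)) {_λkν}(t,c(t)) u^λ u^ν for all i and t, where u = (1, ċ(t)) ∈ ℝ × ℝⁿ. -/
lemma aux_alg (n : ℕ) (Dg : Fin (n+1) → Fin (n+1) → Fin (n+1) → ℝ)
    (Dm : Fin n → Fin n → Fin (n+1) → ℝ) (Dk : Fin n → Fin (n+1) → ℝ) (Df : Fin (n+1) → ℝ)
    (h00 : ∀ l, Dg 0 0 l = -(2 * Df l)) (h0i : ∀ i l, Dg 0 (Fin.succ i) l = -Dk i l)
    (hi0 : ∀ i l, Dg (Fin.succ i) 0 l = -Dk i l)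
    (hij : ∀ i j l, Dg (Fin.succ i) (Fin.succ j) l = -Dm i j l)
    (v : Fin n → ℝ) (u : Fin (n+1) → ℝ) (hu0 : u 0 = 1) (hus : ∀ j, u (Fin.succ j) = v j)
    (i : Fin n) :
    ∑ lam, ∑ nu, (-(1/2) * (Dg i.succ nu lam + Dg i.succ lam nu - Dg lam nu i.succ))
        * u lam * u nu
      = ((∑ j, (∑ lam, u lam * Dm i j lam) * v j) + ∑ lam, u lam * Dk i lam)
        - ((1/2) * (∑ j, ∑ l, Dm j l i.succ * v j * v l) + (∑ j, Dk j i.succ * v j)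
          + Df i.succ) := by
  have e1 : ∑ lam, ∑ nu, Dg i.succ nu lam * u lam * u nu
      = -((∑ j, (∑ lam, u lam * Dm i j lam) * v j) + ∑ lam, u lam * Dk i lam) := by
    rw [Finset.sum_comm, Fin.sum_univ_succ]
    simp only [hi0, hij, hu0, hus, Finset.sum_mul, neg_mul, Finset.sum_neg_distrib, mul_one]
    rw [neg_add, add_comm]
    simp only [mul_comm (u _)]
  have e2 : ∑ lam, ∑ nu, Dg i.succ lam nu * u lam * u nu
      = ∑ lam, ∑ nu, Dg i.succ nu lam * u lam * u nu := by
    rw [Finset.sum_comm]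
    refine Finset.sum_congr rfl fun a _ => Finset.sum_congr rfl fun b _ => by ring
  have e3 : ∑ lam, ∑ nu, Dg lam nu i.succ * u lam * u nu
      = -2 * ((1/2) * (∑ j, ∑ l, Dm j l i.succ * v j * v l) + (∑ j, Dk j i.succ * v j)
          + Df i.succ) := by
    rw [Fin.sum_univ_succ]
    simp only [Fin.sum_univ_succ, h00, h0i, hi0, hij, hu0, hus, neg_mul, mul_one,
      Finset.sum_neg_distrib, Finset.sum_add_distrib]
    ring
  have e4 : ∑ lam, ∑ nu, (-(1/2) * (Dg i.succ nu lam + Dg i.succ lam nu - Dg lam nu i.succ))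
        * u lam * u nu
      = -(1/2) * (∑ lam, ∑ nu, Dg i.succ nu lam * u lam * u nu
        + ∑ lam, ∑ nu, Dg i.succ lam nu * u lam * u nu
        - ∑ lam, ∑ nu, Dg lam nu i.succ * u lam * u nu) := by
    simp only [← Finset.sum_add_distrib, ← Finset.sum_sub_distrib, Finset.mul_sum]
    refine Finset.sum_congr rfl fun a _ => Finset.sum_congr rfl fun b _ => by ring
  rw [e4, e2, e1, e3]
  ring

lemma aux_inv (n : ℕ) (M N : Matrix (Fin n) (Fin n) ℝ) (h : M * N = 1) (a b : Fin n → ℝ) :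
    (∀ i, ∑ j, M i j * a j = -b i) ↔ ∀ i, a i = -∑ j, N i j * b j := by
  have h' : N * M = 1 := mul_eq_one_comm.mp h
  have l : (∀ i, ∑ j, M i j * a j = -b i) ↔ M.mulVec a = -b :=
    ⟨fun H => funext H, fun H i => congrFun H i⟩
  have r : (∀ i, a i = -∑ j, N i j * b j) ↔ a = -(N.mulVec b) :=
    ⟨fun H => funext H, fun H i => congrFun H i⟩
  rw [l, r]
  constructor
  · intro H
    rw [← Matrix.mulVec_neg, ← H, Matrix.mulVec_mulVec, h', Matrix.one_mulVec]
  · intro H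
    rw [H, Matrix.mulVec_neg, Matrix.mulVec_mulVec, h, Matrix.one_mulVec]

lemma aux_chain (n : ℕ) (c : ℝ → Fin n → ℝ) (hc : ∀ i, ContDiff ℝ 2 fun t => c t i)
    (h : (Fin (n+1) → ℝ) → ℝ) (hh : ContDiff ℝ 1 h) (t : ℝ) (u : Fin (n+1) → ℝ)
    (hu0 : u 0 = 1) (hus : ∀ j : Fin n, u j.succ = deriv (fun r => c r j) t) :
    HasDerivAt (fun s => h (Fin.cons s (c s)))
      (∑ lam, u lam * fderiv ℝ h (Fin.cons t (c t)) (Pi.single lam 1)) t := by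
  have hcur : HasDerivAt (fun s => (Fin.cons s (c s) : Fin (n+1) → ℝ)) u t := by
    rw [hasDerivAt_pi]
    intro i
    refine Fin.cases ?_ (fun j => ?_) i
    · simpa [hu0] using hasDerivAt_id' t
    · simp only [Fin.cons_succ, hus]
      exact ((hc j).differentiable (by norm_num) t).hasDerivAt
  have hd := ((hh.differentiable (by norm_num)) (Fin.cons t (c t))).hasFDerivAt
  have := hd.comp_hasDerivAt t hcur
  have e := LinearMap.pi_apply_eq_sum_univ
    (fderiv ℝ h (Fin.cons t (c t))).toLinearMap u
  simp only [ContinuousLinearMap.coe_coe, smul_eq_mul] at e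
  rw [e] at this
  have es : ∀ lam : Fin (n+1), (fun j => if lam = j then (1:ℝ) else 0) = Pi.single lam 1 := by
    intro lam
    funext j
    simp [Pi.single_apply, eq_comm]
  simp only [es] at this
  exact this

/-- the Euler–Lagrange equation of a non-degenerate quadratic Lagrangian
`L = ½ mᵢⱼ ẋⁱẋʲ + kᵢ ẋⁱ + f` on `ℝ × ℝⁿ → ℝ` is equivalent to
`ẍⁱ = −(m⁻¹)^{ik} {_λkν} ẋ^λ ẋ^ν` (with `ẋ⁰ = 1`), where `{_λμν}` are the Christoffel
symbols of the metric `g₀₀ = −2f`, `g₀ᵢ = −kᵢ`, `gᵢⱼ = −mᵢⱼ` extending the Lagrangian. -/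
theorem lagrange_equation_iff_christoffel_form (n : ℕ) (hn : 1 ≤ n)
    (m : (Fin (n+1) → ℝ) → Fin n → Fin n → ℝ)
    (k : (Fin (n+1) → ℝ) → Fin n → ℝ)
    (f : (Fin (n+1) → ℝ) → ℝ)
    (minv : (Fin (n+1) → ℝ) → Fin n → Fin n → ℝ)
    (hm : ∀ i j, ContDiff ℝ 1 fun x => m x i j)
    (hk : ∀ i, ContDiff ℝ 1 fun x => k x i)
    (hf : ContDiff ℝ 1 f)
    (hmsym : ∀ x i j, m x i j = m x j i)
    (hminv : ∀ x i j, ∑ l : Fin n, m x i l * minv x l j = if i = j then 1 else 0)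
    -- the metric g extending the Lagrangian
    (g : (Fin (n+1) → ℝ) → Fin (n+1) → Fin (n+1) → ℝ)
    (hg00 : ∀ x, g x 0 0 = -(2 * f x))
    (hg0i : ∀ x (i : Fin n), g x 0 i.succ = -k x i)
    (hgi0 : ∀ x (i : Fin n), g x i.succ 0 = -k x i)
    (hgij : ∀ x (i j : Fin n), g x i.succ j.succ = -m x i j)
    (c : ℝ → Fin n → ℝ)
    (hc : ∀ i, ContDiff ℝ 2 fun t => c t i) :
    -- the Euler--Lagrange equations ...
    (∀ (i : Fin n) (t : ℝ),
      deriv (fun s =>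
          (∑ j : Fin n, m (Fin.cons s (c s)) i j * deriv (fun r => c r j) s)
            + k (Fin.cons s (c s)) i) t
        = (1/2) * (∑ j : Fin n, ∑ l : Fin n,
              fderiv ℝ (fun x => m x j l) (Fin.cons t (c t)) (Pi.single i.succ 1)
                * deriv (fun r => c r j) t * deriv (fun r => c r l) t)
          + (∑ j : Fin n,
              fderiv ℝ (fun x => k x j) (Fin.cons t (c t)) (Pi.single i.succ 1)
                * deriv (fun r => c r j) t)
          + fderiv ℝ f (Fin.cons t (c t)) (Pi.single i.succ 1))
    -- ... hold iff the dynamic equation in Christoffel form holds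
    ↔ (∀ (i : Fin n) (t : ℝ),
        deriv (deriv fun s => c s i) t
          = -∑ k' : Fin n, ∑ lam : Fin (n+1), ∑ nu : Fin (n+1),
              minv (Fin.cons t (c t)) i k'
                * (-(1/2) *
                    (fderiv ℝ (fun x => g x k'.succ nu) (Fin.cons t (c t)) (Pi.single lam 1)
                      + fderiv ℝ (fun x => g x k'.succ lam) (Fin.cons t (c t)) (Pi.single nu 1)
                      - fderiv ℝ (fun x => g x lam nu) (Fin.cons t (c t)) (Pi.single k'.succ 1)))
                * (Fin.cons 1 (fun j => deriv (fun r => c r j) t) : Fin (n+1) → ℝ) lam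
                * (Fin.cons 1 (fun j => deriv (fun r => c r j) t) : Fin (n+1) → ℝ) nu) := by
  rw [forall_comm, forall_comm (α := Fin n) (β := ℝ)]
  refine forall_congr' fun t => ?_
  set p : Fin (n+1) → ℝ := Fin.cons t (c t) with hp
  set v : Fin n → ℝ := fun j => deriv (fun r => c r j) t with hv
  set u : Fin (n+1) → ℝ := Fin.cons 1 v with hu
  have hu0 : u 0 = 1 := by simp [hu]
  have hus : ∀ j : Fin n, u j.succ = v j := fun j => by simp [hu]
  have hG := aux_alg n (fun a b l => fderiv ℝ (fun x => g x a b) p (Pi.single l 1))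
    (fun a b l => fderiv ℝ (fun x => m x a b) p (Pi.single l 1))
    (fun a l => fderiv ℝ (fun x => k x a) p (Pi.single l 1))
    (fun l => fderiv ℝ f p (Pi.single l 1))
    (fun l => by
      have : (fun x => g x 0 0) = fun x => -(2 * f x) := funext hg00
      simp only [this]
      rw [fderiv_fun_neg, fderiv_const_mul (hf.differentiable (by norm_num) p)]
      simp)
    (fun i l => by
      have : (fun x => g x 0 i.succ) = fun x => -k x i := funext fun x => hg0i x i
      simp only [this]
      rw [fderiv_fun_neg]
      simp)
    (fun i l => by
      have : (fun x => g x i.succ 0) = fun x => -k x i := funext fun x => hgi0 x i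
      simp only [this]
      rw [fderiv_fun_neg]
      simp)
    (fun i j l => by
      have : (fun x => g x i.succ j.succ) = fun x => -m x i j := funext fun x => hgij x i j
      simp only [this]
      rw [fderiv_fun_neg]
      simp) v u hu0 hus
  have hEL : ∀ i : Fin n, deriv (fun s =>
          (∑ j : Fin n, m (Fin.cons s (c s)) i j * deriv (fun r => c r j) s)
            + k (Fin.cons s (c s)) i) t
      = (∑ j, m p i j * deriv (deriv fun s => c s j) t)
        + ((∑ j, (∑ lam, u lam * fderiv ℝ (fun x => m x i j) p (Pi.single lam 1)) * v j)
          + ∑ lam, u lam * fderiv ℝ (fun x => k x i) p (Pi.single lam 1)) := by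
    intro i
    have h1 : ∀ j ∈ (Finset.univ : Finset (Fin n)), HasDerivAt
        (fun s => m (Fin.cons s (c s)) i j * deriv (fun r => c r j) s)
        ((∑ lam, u lam * fderiv ℝ (fun x => m x i j) p (Pi.single lam 1)) * v j
          + m p i j * deriv (deriv fun s => c s j) t) t := by
      intro j _
      have hcj : HasDerivAt (deriv fun r => c r j) (deriv (deriv fun s => c s j) t) t := by
        have h2 : ContDiff ℝ (1 + 1) (fun r => c r j) := by
          have := hc j
          norm_num
          exact this
        exact ((contDiff_succ_iff_deriv.mp h2).2.2.differentiable (by norm_num) t).hasDerivAt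
      exact (aux_chain n c hc (fun x => m x i j) (hm i j) t u hu0 hus).mul hcj
    have h3 := (HasDerivAt.fun_sum h1).add
      (aux_chain n c hc (fun x => k x i) (hk i) t u hu0 hus)
    refine h3.deriv.trans ?_
    rw [Finset.sum_add_distrib]
    ring
  have hN : (Matrix.of (m p)) * (Matrix.of (minv p)) = 1 := by
    ext i j
    simp only [Matrix.mul_apply, Matrix.of_apply, hminv, Matrix.one_apply]
  have hI := aux_inv n _ _ hN (fun j => deriv (deriv fun s => c s j) t)
    (fun k' => ∑ lam, ∑ nu, (-(1/2) *
      (fderiv ℝ (fun x => g x k'.succ nu) p (Pi.single lam 1)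
        + fderiv ℝ (fun x => g x k'.succ lam) p (Pi.single nu 1)
        - fderiv ℝ (fun x => g x lam nu) p (Pi.single k'.succ 1))) * u lam * u nu)
  refine Iff.trans (forall_congr' fun i => ?_) (hI.trans (forall_congr' fun i => ?_))
  · rw [hEL i, hG i]
    simp only [Matrix.of_apply]
    constructor <;> intro H <;> linarith
  · simp only [Matrix.of_apply, Finset.mul_sum, mul_assoc]
end
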